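/- arXiv:math/0310413 — 7 statements merged into one kernel-verified Lean document; each statement's English description precedes it below -/
import Mathlib

section
/- Let 0 < H < 1, c² = 1/(1 + 2H), and define r_H(t) = 2c²(1+H) cosh(Ht) − c² cosh((1+H)t) + (1/2) c² |2 sinh(t/2)|^{2H+2} for real t. Then for every τ ≥ 0, (2 + 2H) · e^{−(1+H)τ} · G_H(e^τ, 1) = r_H(τ), where G_H(t,s) = ∫₀^t ∫₀^s (1/2)(u^{2H} + v^{2H} − |u − v|^{2H}) du dv. -/
/-!
The double integral in `ifbmCov` is elementary: `x * |x| ^ p / (p + 1)` is a primitive of `|x| ^ p`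
and `|x| ^ (p + 2) / (p + 2)` is a primitive of `x * |x| ^ p` on the whole line, so with `p = 2H`
`G_H(t, 1) = (1/2) * ((t ^ (p+1) + t) / (p+1)`
`  - (|t| ^ (p+2) - |t - 1| ^ (p+2) + 1) / ((p+1) * (p+2)))` (`ifbmCov_one`).
Using primitives that are differentiable at `0` avoids splitting the square along its diagonal.
At `t = e^τ`, multiplying by `e^{-(1+H)τ}` pairs the powers of `t` into hyperbolic cosines, and
`e^τ - 1 = e^{τ/2} * 2 sinh (τ/2)` turns the remaining term into the power of `|2 sinh (τ/2)|`.
-/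

open MeasureTheory intervalIntegral Real

/-- The covariance function of the integral of fractional Brownian motion:
`G_H(t,s) = ∫₀^t ∫₀^s (1/2)(u^{2H} + v^{2H} − |u − v|^{2H}) du dv`. -/
noncomputable def ifbmCov (H t s : ℝ) : ℝ :=
  ∫ u in (0:ℝ)..t, ∫ v in (0:ℝ)..s,
    (1 / 2) * (u ^ (2 * H) + v ^ (2 * H) - |u - v| ^ (2 * H))

/-- The correlation function of the Lamperti transform of IFBM, with `c² = 1/(1+2H)`:
`r_H(t) = 2c²(1+H) cosh(Ht) − c² cosh((1+H)t) + (1/2) c² |2 sinh(t/2)|^{2H+2}`. -/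
noncomputable def lampertiCorr (H t : ℝ) : ℝ :=
  2 * (1 / (1 + 2 * H)) * (1 + H) * Real.cosh (H * t)
    - (1 / (1 + 2 * H)) * Real.cosh ((1 + H) * t)
    + (1 / 2) * (1 / (1 + 2 * H)) * |2 * Real.sinh (t / 2)| ^ (2 * H + 2)

/-- `x * |x| ^ p / (p + 1)` is a primitive of `|x| ^ p` for `p > 0`, including at the origin. -/
lemma hasDerivAt_mul_abs_rpow {p : ℝ} (hp : 0 < p) (x : ℝ) :
    HasDerivAt (fun y : ℝ => y * |y| ^ p / (p + 1)) (|x| ^ p) x := by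
  have hp1 : p + 1 ≠ 0 := by positivity
  rcases lt_trichotomy x 0 with hx | rfl | hx
  · have h := ((hasDerivAt_neg x).rpow_const (p := p) (Or.inl (by linarith : -x ≠ 0)))
    have h2 := ((hasDerivAt_id x).mul h).div_const (p + 1)
    have h3 : HasDerivAt (fun y : ℝ => y * |y| ^ p / (p + 1))
        ((1 * (-x) ^ p + id x * (-1 * p * (-x) ^ (p - 1))) / (p + 1)) x := by
      refine h2.congr_of_eventuallyEq ?_
      filter_upwards [eventually_lt_nhds hx] with y hy
      simp [abs_of_neg hy]
    convert h3 using 1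
    have e : (-x) ^ p = (-x) ^ (p - 1) * (-x) := by
      rw [← Real.rpow_add_one (by linarith : -x ≠ 0)]; congr 1; ring
    rw [abs_of_neg hx, e]
    simp only [id]
    field_simp
    ring
  · have hc : Filter.Tendsto (fun y : ℝ => |y| ^ p / (p + 1)) (nhds 0) (nhds (|(0:ℝ)| ^ p)) := by
      have : Continuous (fun y : ℝ => |y| ^ p / (p + 1)) :=
        (continuous_abs.rpow_const (fun _ => Or.inr hp.le)).div_const _
      have h := this.tendsto 0
      simpa [Real.zero_rpow hp.ne'] using h
    rw [hasDerivAt_iff_tendsto_slope]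
    refine (hc.mono_left nhdsWithin_le_nhds).congr' ?_
    filter_upwards [self_mem_nhdsWithin] with y hy
    have hy' : y ≠ 0 := hy
    simp only [slope_def_field]
    field_simp
    simp
  · have h := ((hasDerivAt_id x).rpow_const (p := p) (Or.inl hx.ne'))
    have h2 := ((hasDerivAt_id x).mul h).div_const (p + 1)
    have h3 : HasDerivAt (fun y : ℝ => y * |y| ^ p / (p + 1))
        ((1 * x ^ p + id x * (1 * p * x ^ (p - 1))) / (p + 1)) x := by
      refine h2.congr_of_eventuallyEq ?_
      filter_upwards [eventually_gt_nhds hx] with y hy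
      simp [abs_of_pos hy]
    convert h3 using 1
    have e : x ^ p = x ^ (p - 1) * x := by
      rw [← Real.rpow_add_one hx.ne']; congr 1; ring
    rw [abs_of_pos hx, e]
    simp only [id]
    field_simp
    ring

lemma continuous_abs_rpow' {p : ℝ} (hp : 0 < p) : Continuous (fun x : ℝ => |x| ^ p) :=
  continuous_abs.rpow_const (fun _ => Or.inr hp.le)

lemma integral_abs_sub_rpow {p : ℝ} (hp : 0 < p) (u : ℝ) :
    ∫ v in (0:ℝ)..1, |u - v| ^ p =
      (u * |u| ^ p - (u - 1) * |u - 1| ^ p) / (p + 1) := by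
  rw [intervalIntegral.integral_comp_sub_left (fun x : ℝ => |x| ^ p) u,
    integral_eq_sub_of_hasDerivAt (fun x _ => hasDerivAt_mul_abs_rpow hp x)
      ((continuous_abs_rpow' hp).intervalIntegrable _ _)]
  simp only [sub_zero]
  ring

lemma integral_mul_abs_rpow {p : ℝ} (hp : 0 < p) (a b : ℝ) :
    ∫ x in a..b, x * |x| ^ p = (|b| ^ (p + 2) - |a| ^ (p + 2)) / (p + 2) := by
  have hp2 : p + 2 ≠ 0 := by positivity
  have hd : ∀ x : ℝ, HasDerivAt (fun y : ℝ => |y| ^ (p + 2) / (p + 2)) (x * |x| ^ p) x := by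
    intro x
    have h := (hasDerivAt_abs_rpow x (by linarith : 1 < p + 2)).div_const (p + 2)
    rw [add_sub_cancel_right] at h
    have e : (p + 2) * |x| ^ p * x / (p + 2) = x * |x| ^ p := by field_simp
    rwa [e] at h
  rw [integral_eq_sub_of_hasDerivAt (fun x _ => hd x)
      ((continuous_id.mul (continuous_abs_rpow' hp)).intervalIntegrable _ _)]
  ring

/-- Closed form of the covariance `G_H(t, 1)`. -/
lemma ifbmCov_one {H : ℝ} (hH : 0 < H) {t : ℝ} :
    ifbmCov H t 1 = (1 / 2) * ((t ^ (2 * H + 1) + t) / (2 * H + 1)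
      - (|t| ^ (2 * H + 2) - |t - 1| ^ (2 * H + 2) + 1) / ((2 * H + 1) * (2 * H + 2))) := by
  obtain ⟨p, hp⟩ : ∃ p, p = 2 * H := ⟨_, rfl⟩
  have hp0 : 0 < p := by linarith
  unfold ifbmCov
  rw [← hp]
  have c1 : Continuous (fun x : ℝ => x ^ p) := continuous_id.rpow_const (fun _ => Or.inr hp0.le)
  have hi : ∀ u : ℝ, ∫ v in (0:ℝ)..1, (1 / 2) * (u ^ p + v ^ p - |u - v| ^ p) =
      (1 / 2) * (u ^ p + 1 / (p + 1)
        - (u * |u| ^ p - (u - 1) * |u - 1| ^ p) / (p + 1)) := by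
    intro u
    rw [intervalIntegral.integral_const_mul, intervalIntegral.integral_sub,
      intervalIntegral.integral_add, integral_abs_sub_rpow hp0,
      integral_rpow (Or.inl (by linarith))]
    · simp [Real.zero_rpow (by positivity : p + 1 ≠ 0)]
    · exact intervalIntegrable_const
    · exact c1.intervalIntegrable _ _
    · exact (continuous_const.add c1).intervalIntegrable _ _
    · exact ((continuous_abs_rpow' hp0).comp (continuous_const.sub continuous_id)).intervalIntegrable
        _ _
  have c2 : Continuous (fun x : ℝ => x * |x| ^ p) := continuous_id.mul (continuous_abs_rpow' hp0)
  have c3 : Continuous (fun x : ℝ => (x - 1) * |x - 1| ^ p) :=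
    c2.comp (continuous_id.sub continuous_const)
  simp_rw [hi]
  rw [intervalIntegral.integral_const_mul, intervalIntegral.integral_sub,
    intervalIntegral.integral_add, intervalIntegral.integral_div, intervalIntegral.integral_div,
    intervalIntegral.integral_sub,
    intervalIntegral.integral_comp_sub_right (fun x : ℝ => x * |x| ^ p) 1,
    integral_mul_abs_rpow hp0, integral_mul_abs_rpow hp0,
    integral_rpow (Or.inl (by linarith)), intervalIntegral.integral_const]
  · simp only [Real.zero_rpow (by positivity : p + 1 ≠ 0), abs_zero, zero_sub, abs_neg, abs_one,
      Real.zero_rpow (by positivity : p + 2 ≠ 0), Real.one_rpow, smul_eq_mul, sub_zero]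
    field_simp
    ring
  · exact c2.intervalIntegrable _ _
  · exact c3.intervalIntegrable _ _
  · exact c1.intervalIntegrable _ _
  · exact intervalIntegrable_const
  · exact (c1.add continuous_const).intervalIntegrable _ _
  · exact ((c2.sub c3).div_const _).intervalIntegrable _ _

theorem lamperti_corr_eq
    (H : ℝ) (hH0 : 0 < H) (hH1 : H < 1) (τ : ℝ) (hτ : 0 ≤ τ) :
    (2 + 2 * H) * Real.exp (-(1 + H) * τ) * ifbmCov H (Real.exp τ) 1 =
      lampertiCorr H τ := by
  have hs : |Real.exp τ - 1| ^ (2 * H + 2) =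
      Real.exp ((1 + H) * τ) * |2 * Real.sinh (τ / 2)| ^ (2 * H + 2) := by
    have h1 : Real.exp τ - 1 = Real.exp (τ / 2) * (2 * Real.sinh (τ / 2)) := by
      rw [Real.sinh_eq, mul_div_cancel₀ _ two_ne_zero, mul_sub, ← Real.exp_add, ← Real.exp_add]
      simp
    rw [h1, abs_mul, Real.mul_rpow (abs_nonneg _) (abs_nonneg _), abs_of_pos (Real.exp_pos _),
      ← Real.exp_mul]
    congr 2
    ring
  rw [ifbmCov_one hH0, hs, abs_of_pos (Real.exp_pos τ), ← Real.exp_mul, ← Real.exp_mul]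
  unfold lampertiCorr
  generalize |2 * Real.sinh (τ / 2)| ^ (2 * H + 2) = S
  rw [Real.cosh_eq, Real.cosh_eq]
  -- With `A = e^{Hτ}` and `T = e^τ` every exponential is a monomial in `A`, `T` and their inverses.
  have e1 : Real.exp (-(1 + H) * τ) = (Real.exp (H * τ))⁻¹ * (Real.exp τ)⁻¹ := by
    rw [← Real.exp_neg, ← Real.exp_neg, ← Real.exp_add]; congr 1; ring
  have e2 : Real.exp (-((1 + H) * τ)) = (Real.exp (H * τ))⁻¹ * (Real.exp τ)⁻¹ := by
    rw [← e1]; congr 1; ring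
  have e3 : Real.exp ((1 + H) * τ) = Real.exp (H * τ) * Real.exp τ := by
    rw [← Real.exp_add]; congr 1; ring
  have e4 : Real.exp (τ * (2 * H + 1)) = Real.exp (H * τ) ^ 2 * Real.exp τ := by
    rw [← Real.exp_nat_mul, ← Real.exp_add]; congr 1; push_cast; ring
  have e5 : Real.exp (τ * (2 * H + 2)) = Real.exp (H * τ) ^ 2 * Real.exp τ ^ 2 := by
    rw [← Real.exp_nat_mul, ← Real.exp_nat_mul, ← Real.exp_add]; congr 1; push_cast; ring
  rw [e1, e2, e3, e4, e5, Real.exp_neg (H * τ)]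
  have hA := Real.exp_pos (H * τ)
  have hT := Real.exp_pos τ
  generalize Real.exp (H * τ) = A at *
  generalize Real.exp τ = T at *
  have k1 : 2 * H + 1 ≠ 0 := by positivity
  have k2 : 1 + 2 * H ≠ 0 := by positivity
  have k3 : 2 * H + 2 ≠ 0 := by positivity
  field_simp
  ring
end

section
/- Let 0 < H < 1, c² = 1/(1 + 2H), and r_H(t) = 2c²(1+H) cosh(Ht) − c² cosh((1+H)t) + (1/2) c² |2 sinh(t/2)|^{2H+2}. Then for all real τ and σ, (2 + 2H) · e^{−(1+H)(τ+σ)} · G_H(e^τ, e^σ) = r_H(τ − σ), where G_H(t,s) = ∫₀^t ∫₀^s (1/2)(u^{2H} + v^{2H} − |u − v|^{2H}) du dv. In particular the covariance of the Lamperti transform of IFBM depends only on the time difference, i.e. the transformed process is wide-sense stationary. -/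
/-! The covariance `G_H` has an elementary closed form: the kernel `|x| ^ (2H)` has antiderivative
`|x| ^ (2H) * x / (2H+1)`, whose own antiderivative is `|x| ^ (2H+2) / ((2H+1)(2H+2))`, so applying the
fundamental theorem of calculus twice evaluates the double integral (`ifbmCov_eq`). At
`(t, s) = (e^τ, e^σ)` the prefactor `e^{-(1+H)(τ+σ)}` makes every term a function of `τ - σ`: the pure
powers pair into hyperbolic cosines, and `e^τ - e^σ = e^{(τ+σ)/2} * 2 sinh((τ-σ)/2)` turns
`|e^τ - e^σ| ^ (2H+2)` into the last term of `r_H` (`exp_sub_exp_eq`). -/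

open MeasureTheory intervalIntegral Real

/-- `|x| ^ p * x` is, up to the factor `p + 1`, an antiderivative of `|x| ^ p` on the whole line. -/
lemma hasDerivAt_abs_rpow_mul_self {p : ℝ} (hp : 0 < p) (x : ℝ) :
    HasDerivAt (fun x : ℝ => |x| ^ p * x) ((p + 1) * |x| ^ p) x := by
  have hc : Continuous fun x : ℝ => |x| ^ p :=
    continuous_abs.rpow_const fun _ => Or.inr hp.le
  have hne : ∀ y : ℝ, y ≠ 0 → HasDerivAt (fun x : ℝ => |x| ^ p * x) ((p + 1) * |y| ^ p) y := by
    intro y hy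
    have h := ((hasDerivAt_abs hy).rpow_const (p := p) (Or.inl (abs_ne_zero.2 hy))).mul
      (hasDerivAt_id y)
    refine h.congr_deriv ?_
    have h1 : |y| ^ p = |y| ^ (p - 1) * |y| := by
      rw [← rpow_add_one (abs_ne_zero.2 hy)]; ring_nf
    have h2 : (SignType.sign y : ℝ) * y = |y| := sign_mul_self y
    simp only [id]
    rw [h1]
    linear_combination p * |y| ^ (p - 1) * h2
  rcases eq_or_ne x 0 with rfl | hx
  · exact hasDerivAt_of_hasDerivAt_of_ne (g := fun y : ℝ => (p + 1) * |y| ^ p) hne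
      (hc.mul continuous_id).continuousAt (continuous_const.mul hc).continuousAt
  · exact hne x hx

lemma hasDerivAt_abs_rpow_add_two {p : ℝ} (hp : 0 < p) (x : ℝ) :
    HasDerivAt (fun x : ℝ => |x| ^ (p + 2)) ((p + 2) * (|x| ^ p * x)) x := by
  refine (hasDerivAt_abs_rpow x (by linarith : 1 < p + 2)).congr_deriv ?_
  rw [show p + 2 - 2 = p by ring]; ring

lemma hasDerivAt_rpow_add_one {p : ℝ} (hp : 0 < p) (x : ℝ) :
    HasDerivAt (fun x : ℝ => x ^ (p + 1)) ((p + 1) * x ^ p) x := by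
  refine (hasDerivAt_rpow_const (x := x) (p := p + 1) (Or.inr (by linarith))).congr_deriv ?_
  rw [add_sub_cancel_right]

lemma integral_ifbm_kernel {p : ℝ} (hp : 0 < p) (u s : ℝ) :
    (∫ v in (0:ℝ)..s, (1 / 2) * (u ^ p + v ^ p - |u - v| ^ p)) =
      (1 / 2) * (u ^ p * s + s ^ (p + 1) / (p + 1)
        + (|u - s| ^ p * (u - s) - |u| ^ p * u) / (p + 1)) := by
  have hp1 : p + 1 ≠ 0 := by linarith
  have hd : ∀ v : ℝ, HasDerivAt
      (fun v : ℝ => (1 / 2) * (u ^ p * v + v ^ (p + 1) / (p + 1)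
        + |u - v| ^ p * (u - v) / (p + 1)))
      ((1 / 2) * (u ^ p + v ^ p - |u - v| ^ p)) v := by
    intro v
    have h1 := (hasDerivAt_id v).const_mul (u ^ p)
    have h2 := (hasDerivAt_rpow_add_one hp v).div_const (p + 1)
    have h3 := ((hasDerivAt_abs_rpow_mul_self hp (u - v)).comp v
      ((hasDerivAt_id v).const_sub u)).div_const (p + 1)
    refine (((h1.add h2).add h3).const_mul (1 / 2)).congr_deriv ?_
    field_simp
    ring
  have hc : Continuous fun v : ℝ => (1 / 2) * (u ^ p + v ^ p - |u - v| ^ p) := by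
    have h1 : Continuous fun v : ℝ => v ^ p := continuous_id.rpow_const fun _ => Or.inr hp.le
    have h2 : Continuous fun v : ℝ => |u - v| ^ p :=
      (continuous_const.sub continuous_id).abs.rpow_const fun _ => Or.inr hp.le
    fun_prop
  rw [integral_eq_sub_of_hasDerivAt (fun v _ => hd v) (hc.intervalIntegrable _ _),
    zero_rpow hp1]
  simp only [sub_zero]
  ring

/-- Closed form of the covariance of integrated fractional Brownian motion. -/
lemma ifbmCov_eq {H : ℝ} (hH : 0 < H) {t s : ℝ} (ht : 0 < t) (hs : 0 < s) :
    ifbmCov H t s = (1 / 2) * (t ^ (2 * H + 1) * s / (2 * H + 1) + s ^ (2 * H + 1) * t / (2 * H + 1)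
      + (|t - s| ^ (2 * H + 2) - s ^ (2 * H + 2) - t ^ (2 * H + 2))
        / ((2 * H + 1) * (2 * H + 2))) := by
  unfold ifbmCov
  have hp : 0 < 2 * H := by linarith
  generalize 2 * H = p at *
  simp only [integral_ifbm_kernel hp]
  have hp1 : p + 1 ≠ 0 := by linarith
  have hp2 : p + 2 ≠ 0 := by linarith
  have hd : ∀ u : ℝ, HasDerivAt
      (fun u : ℝ => (1 / 2) * (u ^ (p + 1) * s / (p + 1) + s ^ (p + 1) / (p + 1) * u
        + (|u - s| ^ (p + 2) - |u| ^ (p + 2)) / ((p + 1) * (p + 2))))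
      ((1 / 2) * (u ^ p * s + s ^ (p + 1) / (p + 1)
        + (|u - s| ^ p * (u - s) - |u| ^ p * u) / (p + 1))) u := by
    intro u
    have h1 := ((hasDerivAt_rpow_add_one hp u).mul_const s).div_const (p + 1)
    have h2 := (hasDerivAt_id u).const_mul (s ^ (p + 1) / (p + 1))
    have h3 := (((hasDerivAt_abs_rpow_add_two hp (u - s)).comp u
      ((hasDerivAt_id u).sub_const s)).sub (hasDerivAt_abs_rpow_add_two hp u)).div_const
        ((p + 1) * (p + 2))
    refine (((h1.add h2).add h3).const_mul (1 / 2)).congr_deriv ?_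
    field_simp
  have hc : Continuous fun u : ℝ => (1 / 2) * (u ^ p * s + s ^ (p + 1) / (p + 1)
        + (|u - s| ^ p * (u - s) - |u| ^ p * u) / (p + 1)) := by
    have h1 : Continuous fun v : ℝ => v ^ p := continuous_id.rpow_const fun _ => Or.inr hp.le
    have h2 : Continuous fun v : ℝ => |v - s| ^ p :=
      (continuous_id.sub continuous_const).abs.rpow_const fun _ => Or.inr hp.le
    have h3 : Continuous fun v : ℝ => |v| ^ p :=
      continuous_abs.rpow_const fun _ => Or.inr hp.le
    fun_prop
  rw [integral_eq_sub_of_hasDerivAt (fun v _ => hd v) (hc.intervalIntegrable _ _),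
    zero_rpow hp1]
  simp only [zero_sub, abs_neg, abs_zero, zero_rpow hp2, abs_of_pos ht, abs_of_pos hs]
  ring

lemma exp_sub_exp_eq (τ σ : ℝ) :
    exp τ - exp σ = exp ((τ + σ) / 2) * (2 * sinh ((τ - σ) / 2)) := by
  rw [sinh_eq]
  have h1 : exp τ = exp ((τ + σ) / 2) * exp ((τ - σ) / 2) := by rw [← exp_add]; ring_nf
  have h2 : exp σ = exp ((τ + σ) / 2) * exp (-((τ - σ) / 2)) := by rw [← exp_add]; ring_nf
  linear_combination h1 - h2

/-- The covariance of the Lamperti transform of IFBM depends only on the time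
difference, i.e. the transformed process is wide-sense stationary. -/
theorem lamperti_transform_stationary
    (H : ℝ) (hH0 : 0 < H) (hH1 : H < 1) (τ σ : ℝ) :
    (2 + 2 * H) * Real.exp (-(1 + H) * (τ + σ)) *
        ifbmCov H (Real.exp τ) (Real.exp σ) =
      lampertiCorr H (τ - σ) := by
  have hA : |exp τ - exp σ| ^ (2 * H + 2)
      = exp ((1 + H) * (τ + σ)) * |2 * sinh ((τ - σ) / 2)| ^ (2 * H + 2) := by
    rw [exp_sub_exp_eq, abs_mul, mul_rpow (abs_nonneg _) (abs_nonneg _), abs_exp, ← exp_mul]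
    ring_nf
  rw [ifbmCov_eq hH0 (exp_pos _) (exp_pos _), hA, lampertiCorr, cosh_eq, cosh_eq]
  generalize |2 * sinh ((τ - σ) / 2)| ^ (2 * H + 2) = A
  simp only [← exp_mul, ← exp_add]
  have e0 : exp (-(1 + H) * (τ + σ)) * exp ((1 + H) * (τ + σ)) = 1 := by
    rw [← exp_add, ← exp_zero]; ring_nf
  have e1 : exp (-(1 + H) * (τ + σ)) * exp (τ * (2 * H + 1) + σ) = exp (H * (τ - σ)) := by
    rw [← exp_add]; ring_nf
  have e2 : exp (-(1 + H) * (τ + σ)) * exp (σ * (2 * H + 1) + τ) = exp (-(H * (τ - σ))) := by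
    rw [← exp_add]; ring_nf
  have e3 : exp (-(1 + H) * (τ + σ)) * exp (τ * (2 * H + 2)) = exp ((1 + H) * (τ - σ)) := by
    rw [← exp_add]; ring_nf
  have e4 : exp (-(1 + H) * (τ + σ)) * exp (σ * (2 * H + 2)) = exp (-((1 + H) * (τ - σ))) := by
    rw [← exp_add]; ring_nf
  rw [← e1, ← e2, ← e3, ← e4]
  have h1 : 1 + 2 * H ≠ 0 := by linarith
  have h2 : 2 * H + 1 ≠ 0 := by linarith
  have h3 : 2 * H + 2 ≠ 0 := by linarith
  have hA' : A = exp (-(1 + H) * (τ + σ)) * exp ((1 + H) * (τ + σ)) * A := by rw [e0, one_mul]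
  conv_rhs => rw [hA']
  generalize exp (-(1 + H) * (τ + σ)) = E
  rw [show 1 + 2 * H = 2 * H + 1 by ring]
  field_simp
  ring
end

section
/- Let 0 < H < 1, c² = 1/(1 + 2H), and r_H(t) = 2c²(1+H) cosh(Ht) − c² cosh((1+H)t) + (1/2) c² |2 sinh(t/2)|^{2H+2}. Then lim_{t → 0} (1 − r_H(t)) / t² = (1 − H²)/2. -/
/-! Since `cosh x - 1 = 2 sinh² (x / 2)` and `r_H(0) = 1`, for `t ≠ 0` the quotient
`(1 - r_H(t)) / t²` is a combination of the squares of `sinh (a t) / t` for `a = H / 2`,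
`(1 + H) / 2` and `1 / 2`. Each `sinh (a t) / t` tends to `a`, the derivative of `sinh (a t)` at
zero. The non-smooth term carries the extra factor `|2 sinh (t / 2)| ^ (2 H)`, which tends to `0`
because `H > 0`, so only the two `cosh` terms contribute to the limit. -/

open Filter Topology

lemma tendsto_sinh_mul_div (a : ℝ) :
    Tendsto (fun t : ℝ => Real.sinh (a * t) / t) (𝓝[≠] 0) (𝓝 a) := by
  have h : HasDerivAt (fun t : ℝ => Real.sinh (a * t)) a 0 := by
    simpa using ((hasDerivAt_id (0 : ℝ)).const_mul a).sinh
  have h2 := h.tendsto_slope_zero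
  simpa [div_eq_inv_mul] using h2

lemma cosh_eq_one_add_sinh_half_sq (x : ℝ) :
    Real.cosh x = 1 + 2 * Real.sinh (x / 2) ^ 2 := by
  have h := Real.cosh_two_mul (x / 2)
  rw [Real.cosh_sq, show 2 * (x / 2) = x by ring] at h
  linarith

theorem lamperti_corr_second_order_behavior_at_zero
    (H : ℝ) (hH0 : 0 < H) (hH1 : H < 1) :
    Tendsto (fun t : ℝ => (1 - lampertiCorr H t) / t ^ 2) (𝓝[≠] 0)
      (𝓝 ((1 - H ^ 2) / 2)) := by
  have hc : 1 + 2 * H ≠ 0 := by positivity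
  have h1 := tendsto_sinh_mul_div (H / 2)
  have h2 := tendsto_sinh_mul_div ((1 + H) / 2)
  have h3 := tendsto_sinh_mul_div (1 / 2)
  have h4 : Tendsto (fun t : ℝ => |2 * Real.sinh (t / 2)| ^ (2 * H)) (𝓝[≠] 0) (𝓝 0) := by
    have hcont : Continuous (fun t : ℝ => |2 * Real.sinh (t / 2)| ^ (2 * H)) := by
      refine Continuous.rpow_const ?_ (fun _ => Or.inr (by positivity))
      exact (continuous_const.mul (Real.continuous_sinh.comp (continuous_id.div_const 2))).abs
    have h := hcont.tendsto 0
    simp only [zero_div, Real.sinh_zero, mul_zero, abs_zero] at h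
    rw [Real.zero_rpow (by positivity)] at h
    exact h.mono_left nhdsWithin_le_nhds
  have h := (((h1.pow 2).const_mul (-(4 * (1 + H) / (1 + 2 * H)))).add
    ((h2.pow 2).const_mul (2 / (1 + 2 * H)))).sub
    ((h4.mul (h3.pow 2)).const_mul (2 / (1 + 2 * H)))
  have hlim : -(4 * (1 + H) / (1 + 2 * H)) * (H / 2) ^ 2 + 2 / (1 + 2 * H) * ((1 + H) / 2) ^ 2
      - 2 / (1 + 2 * H) * (0 * (1 / 2) ^ 2) = (1 - H ^ 2) / 2 := by
    field_simp
    ring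
  rw [hlim] at h
  refine h.congr' ?_
  filter_upwards [self_mem_nhdsWithin] with t ht
  have ht0 : t ≠ 0 := ht
  have hpow : |2 * Real.sinh (t / 2)| ^ (2 * H + 2)
      = |2 * Real.sinh (t / 2)| ^ (2 * H) * (2 * Real.sinh (t / 2)) ^ 2 := by
    rw [Real.rpow_add' (abs_nonneg _) (by positivity), Real.rpow_two, sq_abs]
  rw [lampertiCorr, hpow, cosh_eq_one_add_sinh_half_sq (H * t),
    cosh_eq_one_add_sinh_half_sq ((1 + H) * t), show H / 2 * t = H * t / 2 by ring,
    show (1 + H) / 2 * t = (1 + H) * t / 2 by ring, show 1 / 2 * t = t / 2 by ring]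
  -- The power with real exponent is an atom for the remaining rational identity.
  generalize |2 * Real.sinh (t / 2)| ^ (2 * H) = p
  field_simp
  ring
end

section
/- Let 0 < H < 1, c² = 1/(1 + 2H), and r_H(t) = 2c²(1+H) cosh(Ht) − c² cosh((1+H)t) + (1/2) c² |2 sinh(t/2)|^{2H+2}. Then as t → 0⁺, r_H(t) = 1 − (1/2)(1 − H²) t² + (1/2) c² t^{2+2H} + O(t⁴); that is, there exist constants C > 0 and δ > 0 such that |r_H(t) − 1 + (1/2)(1 − H²) t² − (1/2) c² t^{2+2H}| ≤ C t⁴ for all 0 < t < δ. -/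
lemma abs_cosh_sub_quadratic_le {x : ℝ} (hx : |x| ≤ 1) :
    |Real.cosh x - 1 - x ^ 2 / 2| ≤ x ^ 4 := by
  have h1 := Real.exp_bound hx (n := 4) (by norm_num)
  have h2 := Real.exp_bound (x := -x) (by rwa [abs_neg]) (n := 4) (by norm_num)
  rw [abs_neg] at h2
  have h4 : |x| ^ 4 = x ^ 4 := Even.pow_abs (by decide) x
  rw [h4] at h1 h2
  norm_num [Finset.sum_range_succ, Nat.factorial] at h1 h2
  rw [abs_le] at h1 h2 ⊢
  rw [Real.cosh_eq]
  have : 0 ≤ x ^ 4 := by positivity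
  constructor <;> nlinarith [h1.1, h1.2, h2.1, h2.2]

lemma two_mul_sinh_half_le {t : ℝ} (h0 : 0 < t) (h1 : t ≤ 1) :
    2 * Real.sinh (t / 2) ≤ t * (1 + t ^ 2) := by
  have ha : |t / 2| = t / 2 := abs_of_pos (by positivity)
  have e1 := Real.exp_bound (x := t / 2) (by rw [ha]; linarith) (n := 3) (by norm_num)
  have e2 := Real.exp_bound (x := -(t / 2)) (by rw [abs_neg, ha]; linarith) (n := 3) (by norm_num)
  rw [abs_neg] at e2
  rw [ha] at e1 e2
  norm_num [Finset.sum_range_succ, Nat.factorial] at e1 e2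
  rw [abs_le] at e1 e2
  rw [Real.sinh_eq]
  have : 0 ≤ t ^ 3 := by positivity
  nlinarith [e1.2, e2.1]

lemma abs_sinh_rpow_sub_rpow_le {t p : ℝ} (h0 : 0 < t) (h1 : t ≤ 1) (hp2 : 2 ≤ p) (hp4 : p ≤ 4) :
    |(|2 * Real.sinh (t / 2)| ^ p - t ^ p)| ≤ 15 * t ^ 4 := by
  have hlow : t ≤ 2 * Real.sinh (t / 2) := by
    have := Real.self_le_sinh_iff.2 (show 0 ≤ t / 2 by positivity)
    linarith
  rw [abs_of_pos (h0.trans_le hlow)]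
  have hmono : t ^ p ≤ (2 * Real.sinh (t / 2)) ^ p :=
    Real.rpow_le_rpow h0.le hlow (by linarith)
  have hup : (2 * Real.sinh (t / 2)) ^ p ≤ t ^ p * (1 + t ^ 2) ^ p := by
    rw [← Real.mul_rpow h0.le (by positivity)]
    exact Real.rpow_le_rpow (h0.le.trans hlow) (two_mul_sinh_half_le h0 h1) (by linarith)
  have hq : (1 + t ^ 2) ^ p ≤ (1 + t ^ 2) ^ 4 := by
    have := Real.rpow_le_rpow_of_exponent_le (x := 1 + t ^ 2) (by nlinarith [sq_nonneg t]) hp4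
    exact_mod_cast this
  have hs : t ^ p ≤ t ^ 2 := by
    have := Real.rpow_le_rpow_of_exponent_ge h0 h1 hp2
    exact_mod_cast this
  have hr : (1 + t ^ 2) ^ 4 - 1 ≤ 15 * t ^ 2 := by
    have hy0 : 0 ≤ t ^ 2 := sq_nonneg t
    have hy1 : t ^ 2 ≤ 1 := pow_le_one₀ h0.le h1
    generalize t ^ 2 = y at hy0 hy1 ⊢
    have h2 : y ^ 2 ≤ y := by nlinarith
    have h3 : y ^ 3 ≤ y := by nlinarith
    have h4 : y ^ 4 ≤ y := by nlinarith
    nlinarith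
  have hpos : 0 ≤ t ^ p := (Real.rpow_pos_of_pos h0 p).le
  rw [abs_of_nonneg (by linarith)]
  calc (2 * Real.sinh (t / 2)) ^ p - t ^ p ≤ t ^ p * ((1 + t ^ 2) ^ p - 1) := by linarith
    _ ≤ t ^ p * (15 * t ^ 2) := by gcongr; linarith
    _ ≤ t ^ 2 * (15 * t ^ 2) := by gcongr
    _ = 15 * t ^ 4 := by ring

/-- As `t → 0⁺`, `r_H(t) = 1 − (1/2)(1 − H²) t² + (1/2) c² t^{2+2H} + O(t⁴)`
with `c² = 1/(1+2H)`. -/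
theorem lamperti_corr_expansion_at_zero
    (H : ℝ) (hH0 : 0 < H) (hH1 : H < 1) :
    ∃ C > (0:ℝ), ∃ δ > (0:ℝ), ∀ t : ℝ, 0 < t → t < δ →
      |lampertiCorr H t - 1 + (1 / 2) * (1 - H ^ 2) * t ^ 2 -
          (1 / 2) * (1 / (1 + 2 * H)) * t ^ (2 + 2 * H)| ≤ C * t ^ 4 := by
  refine ⟨28, by norm_num, 1 / 2, by norm_num, fun t h0 h1 => ?_⟩
  have hA := abs_cosh_sub_quadratic_le (x := H * t) (by
    rw [abs_of_pos (by positivity)]; nlinarith)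
  have hB := abs_cosh_sub_quadratic_le (x := (1 + H) * t) (by
    rw [abs_of_pos (by positivity)]; nlinarith)
  have hS := abs_sinh_rpow_sub_rpow_le (p := 2 * H + 2) h0 (by linarith) (by linarith)
    (by linarith)
  have hc : (1 + 2 * H) ≠ 0 := by positivity
  unfold lampertiCorr
  rw [add_comm 2 (2 * H)]
  generalize |2 * Real.sinh (t / 2)| ^ (2 * H + 2) = S at hS ⊢
  generalize t ^ (2 * H + 2) = T at hS ⊢
  generalize Real.cosh (H * t) = A at hA ⊢
  generalize Real.cosh ((1 + H) * t) = B at hB ⊢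
  have key : 2 * (1 / (1 + 2 * H)) * (1 + H) * A - 1 / (1 + 2 * H) * B
      + 1 / 2 * (1 / (1 + 2 * H)) * S - 1 + 1 / 2 * (1 - H ^ 2) * t ^ 2
      - 1 / 2 * (1 / (1 + 2 * H)) * T
      = (2 * (1 + H) * (A - 1 - (H * t) ^ 2 / 2) - (B - 1 - ((1 + H) * t) ^ 2 / 2)
        + 1 / 2 * (S - T)) / (1 + 2 * H) := by
    field_simp
    ring
  have ht4 : 0 ≤ t ^ 4 := by positivity
  have hA' : |A - 1 - (H * t) ^ 2 / 2| ≤ t ^ 4 := by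
    refine hA.trans ?_
    rw [mul_pow]
    exact mul_le_of_le_one_left ht4 (pow_le_one₀ hH0.le hH1.le)
  have hB' : |B - 1 - ((1 + H) * t) ^ 2 / 2| ≤ 16 * t ^ 4 := by
    refine hB.trans ?_
    rw [mul_pow]
    have : (1 + H) ^ 4 ≤ 2 ^ 4 := by gcongr; linarith
    nlinarith
  rw [key, abs_div, abs_of_pos (show 0 < 1 + 2 * H by positivity)]
  refine (div_le_self (abs_nonneg _) (by linarith)).trans ?_
  rw [abs_le] at hA' hB' hS ⊢
  constructor <;> nlinarith [hA'.1, hA'.2, hB'.1, hB'.2, hS.1, hS.2]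
end

section
/- Let 0 < H < 1, c² = 1/(1 + 2H), and r_H(t) = 2c²(1+H) cosh(Ht) − c² cosh((1+H)t) + (1/2) c² |2 sinh(t/2)|^{2H+2}. Then r_H is twice differentiable at t = 0 and its second derivative at 0 equals −(1 − H²). -/
/-!
The only term of `lampertiCorr` that is not smooth at `0` is `|2 sinh (t/2)| ^ (2H+2)`. Its exponent
exceeds `2`, so it contributes nothing to the second derivative at `0`: the first derivative of
`|x| ^ p` is `p |x| ^ (p-2) x`, which is `o(x)` at `0` for `p > 2`. The two hyperbolic cosines
contribute `c² (2 (1+H) H² - (1+H)²) = c² (1+H) (2H+1) (H-1) = -(1 - H²)`.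
-/

open Filter Topology

/-- With `q = p - 2`, the function `|x| ^ q * x` is the derivative of `|x| ^ p` up to the factor `p`,
so `|x| ^ p` has second derivative `0` at `0` for `p > 2`. -/
lemma hasDerivAt_abs_rpow_mul_zero {q : ℝ} (hq : 0 < q) :
    HasDerivAt (fun x : ℝ => |x| ^ q * x) 0 0 := by
  rw [hasDerivAt_iff_isLittleO]
  have h : Tendsto (fun x : ℝ => |x| ^ q) (𝓝 0) (𝓝 0) := by
    have hc : Continuous fun x : ℝ => |x| ^ q :=
      continuous_abs.rpow_const fun _ => Or.inr hq.le
    simpa [Real.zero_rpow hq.ne'] using hc.tendsto 0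
  simpa using ((Asymptotics.isLittleO_one_iff ℝ).2 h).mul_isBigO
    (Asymptotics.isBigO_refl (fun x : ℝ => x) (𝓝 0))

lemma hasDerivAt_two_mul_sinh_half (t : ℝ) :
    HasDerivAt (fun t : ℝ => 2 * Real.sinh (t / 2)) (Real.cosh (t / 2)) t := by
  have h := (((hasDerivAt_id t).div_const 2).sinh).const_mul 2
  refine h.congr_deriv ?_
  simp only [id]
  ring

lemma hasDerivAt_lampertiCorr (H : ℝ) (hH0 : 0 < H) (t : ℝ) :
    HasDerivAt (lampertiCorr H)
      (2 * (1 / (1 + 2 * H)) * (1 + H) * (Real.sinh (H * t) * H)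
        - (1 / (1 + 2 * H)) * (Real.sinh ((1 + H) * t) * (1 + H))
        + (1 / 2) * (1 / (1 + 2 * H)) * ((2 * H + 2) *
          ((|2 * Real.sinh (t / 2)| ^ (2 * H) * (2 * Real.sinh (t / 2))) * Real.cosh (t / 2)))) t := by
  have h1 := (((hasDerivAt_id t).const_mul H).cosh).const_mul (2 * (1 / (1 + 2 * H)) * (1 + H))
  have h2 := (((hasDerivAt_id t).const_mul (1 + H)).cosh).const_mul (1 / (1 + 2 * H))
  have h3 := ((hasDerivAt_abs_rpow (2 * Real.sinh (t / 2))
    (show (1 : ℝ) < 2 * H + 2 by linarith)).comp t (hasDerivAt_two_mul_sinh_half t)).const_mul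
      ((1 / 2) * (1 / (1 + 2 * H)))
  refine ((h1.sub h2).add h3).congr_deriv ?_
  simp only [id, add_sub_cancel_right]
  ring

theorem hasDerivAt_deriv_lampertiCorr_zero (H : ℝ) (hH0 : 0 < H) :
    HasDerivAt (deriv (lampertiCorr H)) (-(1 - H ^ 2)) 0 := by
  rw [show deriv (lampertiCorr H) = _ from funext fun t => (hasDerivAt_lampertiCorr H hH0 t).deriv]
  have h1 := ((((hasDerivAt_id (0 : ℝ)).const_mul H).sinh).mul_const H).const_mul
    (2 * (1 / (1 + 2 * H)) * (1 + H))
  have h2 := ((((hasDerivAt_id (0 : ℝ)).const_mul (1 + H)).sinh).mul_const (1 + H)).const_mul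
    (1 / (1 + 2 * H))
  have h3 : HasDerivAt
      (fun t : ℝ => |2 * Real.sinh (t / 2)| ^ (2 * H) * (2 * Real.sinh (t / 2))) 0 0 := by
    have h := HasDerivAt.comp_of_eq (0 : ℝ)
      (hasDerivAt_abs_rpow_mul_zero (show 0 < 2 * H by linarith))
      (hasDerivAt_two_mul_sinh_half 0) (by simp)
    exact h.congr_deriv (by simp)
  have h4 := ((h3.mul ((hasDerivAt_id (0 : ℝ)).div_const 2).cosh).const_mul
    (2 * H + 2)).const_mul ((1 / 2) * (1 / (1 + 2 * H)))
  refine ((h1.sub h2).add h4).congr_deriv ?_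
  have hne : 1 + 2 * H ≠ 0 := by linarith
  simp only [id, mul_zero, zero_div, Real.cosh_zero, Real.sinh_zero, mul_one, one_mul, zero_mul,
    add_zero]
  field_simp
  ring

/-- `r_H` is twice differentiable at `t = 0` and `r_H''(0) = −(1 − H²)`. -/
theorem lamperti_corr_second_deriv_at_zero
    (H : ℝ) (hH0 : 0 < H) (hH1 : H < 1) :
    (∀ᶠ t in 𝓝 (0:ℝ), DifferentiableAt ℝ (lampertiCorr H) t) ∧
      DifferentiableAt ℝ (deriv (lampertiCorr H)) 0 ∧
      deriv (deriv (lampertiCorr H)) 0 = -(1 - H ^ 2) := by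
  have h := hasDerivAt_deriv_lampertiCorr_zero H hH0
  exact ⟨.of_forall fun t => (hasDerivAt_lampertiCorr H hH0 t).differentiableAt,
    h.differentiableAt, h.deriv⟩
end

section
/- Let 0 < H < 1/2, c² = 1/(1 + 2H), and r_H(t) = 2c²(1+H) cosh(Ht) − c² cosh((1+H)t) + (1/2) c² |2 sinh(t/2)|^{2H+2}. Then lim_{t → ∞} e^{Ht} r_H(t) = (1 + H)/(1 + 2H). In particular r_H(t) decays exponentially at rate ρ = H = min(H, 1 − H). -/
/-!
Put `u = e^{-t}` and `p = 2H + 2`. For `t > 0` one has `2 sinh(t/2) = e^{t/2} (1 - u)`, so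
`e^{Ht} r_H(t) = c² ((1 + H) - u/2 + (1/2) e^{(1+2H)t} R(u))` with `R(u) = (1 - u)^p - 1 + p u`
(`exp_mul_lampertiCorr`): the linear term `p u` absorbs the growing part of `cosh(Ht)`, and the `1`
absorbs that of `cosh((1+H)t)`. Two Bernoulli inequalities give `0 ≤ R(u) ≤ 3u²`
(`one_sub_rpow_remainder_nonneg`, `one_sub_rpow_remainder_le`), so the last term is
`O(e^{-(1-2H)t})`, which tends to `0` because `H < 1/2`.
-/

open Filter Topology

theorem one_sub_rpow_remainder_nonneg {H u : ℝ} (hH0 : 0 < H) (hu1 : u ≤ 1) :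
    0 ≤ (1 - u) ^ (2 * H + 2) - 1 + (2 * H + 2) * u := by
  have h := one_add_mul_self_le_rpow_one_add (s := -u) (by linarith)
    (p := 2 * H + 2) (by linarith)
  rw [← sub_eq_add_neg] at h
  linarith

/-- Quadratic bound for the Taylor remainder, from `(1 - u)^(2H+2) = (1 - u)^(2H) (1 - u)^2` and
Bernoulli's inequality for the exponent `2H ≤ 1`. -/
theorem one_sub_rpow_remainder_le {H u : ℝ} (hH0 : 0 < H) (hH1 : H < 1 / 2)
    (hu0 : 0 ≤ u) (hu1 : u < 1) :
    (1 - u) ^ (2 * H + 2) - 1 + (2 * H + 2) * u ≤ 3 * u ^ 2 := by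
  have h := rpow_one_add_le_one_add_mul_self (s := -u) (by linarith)
    (p := 2 * H) (by linarith) (by linarith)
  rw [← sub_eq_add_neg] at h
  have hsplit : (1 - u) ^ (2 * H + 2) = (1 - u) ^ (2 * H) * (1 - u) ^ 2 := by
    rw [Real.rpow_add (by linarith), Real.rpow_two]
  have hmul := mul_le_mul_of_nonneg_right h (sq_nonneg (1 - u))
  have h3 : 0 ≤ H * u ^ 3 := by positivity
  have h2 : 0 ≤ (1 / 2 - H) * u ^ 2 := mul_nonneg (by linarith) (sq_nonneg u)
  rw [hsplit]
  nlinarith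

theorem abs_two_mul_sinh_half_rpow {H t : ℝ} (ht : 0 < t) :
    |2 * Real.sinh (t / 2)| ^ (2 * H + 2)
      = Real.exp ((1 + H) * t) * (1 - Real.exp (-t)) ^ (2 * H + 2) := by
  have hu : 0 < 1 - Real.exp (-t) := by
    have := Real.exp_lt_one_iff.2 (show -t < 0 by linarith)
    linarith
  have hs : 2 * Real.sinh (t / 2) = Real.exp (t / 2) * (1 - Real.exp (-t)) := by
    rw [Real.sinh_eq, mul_sub, ← Real.exp_add, show t / 2 + -t = -(t / 2) by ring]
    ring
  rw [hs, abs_of_pos (by positivity), Real.mul_rpow (Real.exp_pos _).le hu.le, ← Real.exp_mul]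
  congr 2
  ring

theorem exp_mul_lampertiCorr {H t : ℝ} (ht : 0 < t) :
    Real.exp (H * t) * lampertiCorr H t = (1 / (1 + 2 * H)) * ((1 + H) - Real.exp (-t) / 2
      + (1 / 2) * (Real.exp ((1 + 2 * H) * t)
        * ((1 - Real.exp (-t)) ^ (2 * H + 2) - 1 + (2 * H + 2) * Real.exp (-t)))) := by
  rw [lampertiCorr, abs_two_mul_sinh_half_rpow ht, Real.cosh_eq, Real.cosh_eq]
  generalize (1 - Real.exp (-t)) ^ (2 * H + 2) = S
  have e1 : Real.exp (H * t) * Real.exp (-(H * t)) = 1 := by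
    rw [← Real.exp_add, add_neg_cancel, Real.exp_zero]
  have e2 : Real.exp (H * t) * Real.exp ((1 + H) * t) = Real.exp ((1 + 2 * H) * t) := by
    rw [← Real.exp_add]; congr 1; ring
  have e3 : Real.exp (H * t) * Real.exp (-((1 + H) * t)) = Real.exp (-t) := by
    rw [← Real.exp_add]; congr 1; ring
  have e4 : Real.exp (H * t) * Real.exp (H * t)
      = Real.exp ((1 + 2 * H) * t) * Real.exp (-t) := by
    rw [← Real.exp_add, ← Real.exp_add]; congr 1; ring
  generalize 1 / (1 + 2 * H) = c
  linear_combination c * (1 + H) * e1 + (1 / 2 * c * S - 1 / 2 * c) * e2 - 1 / 2 * c * e3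
    + c * (1 + H) * e4

theorem tendsto_exp_mul_remainder {H : ℝ} (hH0 : 0 < H) (hH1 : H < 1 / 2) :
    Tendsto (fun t : ℝ => Real.exp ((1 + 2 * H) * t)
      * ((1 - Real.exp (-t)) ^ (2 * H + 2) - 1 + (2 * H + 2) * Real.exp (-t))) atTop (𝓝 0) := by
  have hlim : Tendsto (fun t : ℝ => 3 * Real.exp (-((1 - 2 * H) * t))) atTop (𝓝 0) := by
    have h := (Real.tendsto_exp_neg_atTop_nhds_zero.comp
      (tendsto_id.const_mul_atTop (show 0 < 1 - 2 * H by linarith))).const_mul 3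
    simpa using h
  refine tendsto_of_tendsto_of_tendsto_of_le_of_le' tendsto_const_nhds hlim ?_ ?_
  · filter_upwards [eventually_gt_atTop 0] with t ht
    have hu := Real.exp_lt_one_iff.2 (show -t < 0 by linarith)
    exact mul_nonneg (Real.exp_pos _).le (one_sub_rpow_remainder_nonneg hH0 hu.le)
  · filter_upwards [eventually_gt_atTop 0] with t ht
    have hu := Real.exp_lt_one_iff.2 (show -t < 0 by linarith)
    calc _ ≤ Real.exp ((1 + 2 * H) * t) * (3 * Real.exp (-t) ^ 2) :=
          mul_le_mul_of_nonneg_left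
            (one_sub_rpow_remainder_le hH0 hH1 (Real.exp_pos _).le hu) (Real.exp_pos _).le
      _ = 3 * (Real.exp ((1 + 2 * H) * t) * (Real.exp (-t) * Real.exp (-t))) := by ring
      _ = 3 * Real.exp (-((1 - 2 * H) * t)) := by
          rw [← Real.exp_add, ← Real.exp_add]; congr 2; ring

/-- For `0 < H < 1/2`, `r_H(t) ~ (1+H)/(1+2H) · e^{−Ht}` as `t → ∞`:
the correlation decays exponentially at rate `ρ = H = min(H, 1 − H)`. -/
theorem lamperti_corr_exponential_decay_small_H
    (H : ℝ) (hH0 : 0 < H) (hH1 : H < 1 / 2) :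
    Tendsto (fun t : ℝ => Real.exp (H * t) * lampertiCorr H t) atTop
      (𝓝 ((1 + H) / (1 + 2 * H))) := by
  have h := ((Real.tendsto_exp_neg_atTop_nhds_zero.div_const 2).const_sub (1 + H)).add
    ((tendsto_exp_mul_remainder hH0 hH1).const_mul (1 / 2))
  have h' := h.const_mul (1 / (1 + 2 * H))
  rw [show 1 / (1 + 2 * H) * (1 + H - 0 / 2 + 1 / 2 * 0) = (1 + H) / (1 + 2 * H) by ring] at h'
  refine h'.congr' ?_
  filter_upwards [eventually_gt_atTop 0] with t ht
  exact (exp_mul_lampertiCorr ht).symm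
end

section
/- The function g(x) = 1/x − 1/(e^x − 1) is strictly decreasing on (0, ∞), satisfies lim_{x → 0⁺} g(x) = 1/2 and lim_{x → ∞} g(x) = 0, and consequently for every m with 0 < m < 1/2 the equation 1/x − 1/(e^x − 1) = m has a unique solution x ∈ (0, ∞). -/
open Filter Topology

/-!
Since `e^x - 1 = 2 e^{x/2} sinh (x/2)`, the function `g(x) = 1/x - 1/(e^x - 1)` has derivative
`-1/x² + 1/(2 sinh (x/2))²`, which is negative for `x > 0` because `sinh t > t` for `t > 0`.
The limit at `0⁺` comes from the second-order Taylor expansion of `exp`, after writing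
`g(x) = ((e^x - 1 - x)/x²) / ((e^x - 1)/x)`. Existence of a root is the intermediate value theorem
on the connected set `(0, ∞)` with the two limits as endpoint values; uniqueness is injectivity of
a strictly decreasing function.
-/

lemma exp_sub_one_pos {x : ℝ} (hx : 0 < x) : 0 < Real.exp x - 1 :=
  sub_pos.2 (Real.one_lt_exp_iff.2 hx)

lemma hasDerivAt_g {x : ℝ} (hx : 0 < x) :
    HasDerivAt (fun x : ℝ => 1 / x - 1 / (Real.exp x - 1))
      (-1 / x ^ 2 + Real.exp x / (Real.exp x - 1) ^ 2) x := by
  have h1 : HasDerivAt (fun y : ℝ => y⁻¹) (-(x ^ 2)⁻¹) x := hasDerivAt_inv hx.ne'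
  have h2 := ((Real.hasDerivAt_exp x).sub_const 1).inv (exp_sub_one_pos hx).ne'
  simp only [one_div]
  refine (h1.sub h2).congr_deriv ?_
  ring

/-- Equivalent to `x < 2 sinh (x/2)`; this is what makes `g` decreasing. -/
lemma sq_mul_exp_lt {x : ℝ} (hx : 0 < x) :
    x ^ 2 * Real.exp x < (Real.exp x - 1) ^ 2 := by
  have hs : x / 2 < Real.sinh (x / 2) := Real.self_lt_sinh_iff.2 (by positivity)
  have he : Real.exp x = Real.exp (x / 2) ^ 2 := by
    rw [← Real.exp_nat_mul]; congr 1; push_cast; ring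
  have hmul : Real.exp (x / 2) * Real.exp (-(x / 2)) = 1 := by
    rw [← Real.exp_add]; simp
  rw [Real.sinh_eq] at hs
  have hp := Real.exp_pos (x / 2)
  have key : x * Real.exp (x / 2) < Real.exp x - 1 := by
    rw [he]
    nlinarith
  calc x ^ 2 * Real.exp x = (x * Real.exp (x / 2)) ^ 2 := by rw [he]; ring
    _ < (Real.exp x - 1) ^ 2 := by gcongr

lemma g_strictAntiOn :
    StrictAntiOn (fun x : ℝ => 1 / x - 1 / (Real.exp x - 1)) (Set.Ioi 0) := by
  refine strictAntiOn_of_deriv_neg (convex_Ioi 0)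
    (fun x hx => (hasDerivAt_g hx).continuousAt.continuousWithinAt) fun x hx => ?_
  rw [interior_Ioi] at hx
  have hx0 : 0 < x := hx
  have := exp_sub_one_pos hx0
  rw [(hasDerivAt_g hx0).deriv, neg_div, neg_add_lt_iff_lt_add, add_zero,
    div_lt_div_iff₀ (by positivity) (by positivity)]
  linarith [sq_mul_exp_lt hx0]

lemma tendsto_g_zero :
    Tendsto (fun x : ℝ => 1 / x - 1 / (Real.exp x - 1)) (𝓝[>] 0) (𝓝 (1 / 2)) := by
  have h1 := (Real.exp_sub_sum_range_succ_isLittleO_pow 1).tendsto_div_nhds_zero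
  have h2 := (Real.exp_sub_sum_range_succ_isLittleO_pow 2).tendsto_div_nhds_zero
  have h := ((h2.add_const (1 / 2)).div (h1.add_const 1) (by norm_num)).mono_left
    (nhdsWithin_le_nhds (s := Set.Ioi 0))
  rw [zero_add, zero_add, div_one] at h
  refine h.congr' ?_
  filter_upwards [self_mem_nhdsWithin] with x hx
  have hx0 : 0 < x := hx
  have he := exp_sub_one_pos hx0
  have hA : (Real.exp x - ∑ i ∈ Finset.range (2 + 1), x ^ i / (i.factorial : ℝ)) / x ^ 2 + 1 / 2
      = (Real.exp x - 1 - x) / x ^ 2 := by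
    simp [Finset.sum_range_succ]
    field_simp
    ring
  have hB : (Real.exp x - ∑ i ∈ Finset.range (1 + 1), x ^ i / (i.factorial : ℝ)) / x ^ 1 + 1
      = (Real.exp x - 1) / x := by
    simp [Finset.sum_range_succ]
    field_simp
    ring
  simp only [Pi.div_apply]
  rw [hA, hB]
  field_simp

lemma tendsto_g_atTop :
    Tendsto (fun x : ℝ => 1 / x - 1 / (Real.exp x - 1)) atTop (𝓝 0) := by
  have h1 : Tendsto (fun x : ℝ => Real.exp x - 1) atTop atTop :=
    tendsto_atTop_add_const_right _ _ Real.tendsto_exp_atTop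
  simpa [one_div] using tendsto_inv_atTop_zero.sub h1.inv_tendsto_atTop

/-- The function `g(x) = 1/x − 1/(e^x − 1)` is strictly decreasing on `(0, ∞)`,
tends to `1/2` as `x → 0⁺` and to `0` as `x → ∞`; consequently for every
`0 < m < 1/2` the maximum likelihood equation `g(x) = m` has a unique root
`x ∈ (0, ∞)`. -/
theorem ml_equation_unique_root :
    StrictAntiOn (fun x : ℝ => 1 / x - 1 / (Real.exp x - 1)) (Set.Ioi 0) ∧
      Tendsto (fun x : ℝ => 1 / x - 1 / (Real.exp x - 1)) (𝓝[>] 0)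
        (𝓝 (1 / 2)) ∧
      Tendsto (fun x : ℝ => 1 / x - 1 / (Real.exp x - 1)) atTop (𝓝 0) ∧
      ∀ m : ℝ, 0 < m → m < 1 / 2 →
        ∃! x : ℝ, x ∈ Set.Ioi (0:ℝ) ∧
          1 / x - 1 / (Real.exp x - 1) = m := by
  refine ⟨g_strictAntiOn, tendsto_g_zero, tendsto_g_atTop, fun m h0 h1 => ?_⟩
  obtain ⟨x, hx, hxm⟩ := isPreconnected_Ioi.intermediate_value_Ioo
    (le_principal_iff.2 (Ioi_mem_atTop (0 : ℝ))) (le_principal_iff.2 self_mem_nhdsWithin)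
    (fun x hx => (hasDerivAt_g hx).continuousAt.continuousWithinAt)
    tendsto_g_atTop tendsto_g_zero ⟨h0, h1⟩
  exact ⟨x, ⟨hx, hxm⟩, fun y hy => g_strictAntiOn.injOn hy.1 hx (hy.2.trans hxm.symm)⟩
end
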